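/- arXiv:math/0602033 — 2 statements merged into one kernel-verified Lean document; each statement's English description precedes it below -/
import Mathlib

section
/- Given not necessarily distinct complex numbers z_1, ..., z_n with Im z_k > 0 for all k, there exists a unique n×n Jacobi matrix J with Im b_1 > 0, b_k real for k ≥ 2, and a_k > 0 for all k, whose eigenvalues counted with algebraic multiplicity are exactly z_1, ..., z_n. -/
/-- The `n × n` complex Jacobi matrix with diagonal entries `b 1, …, b n` and symmetric
off-diagonal entries `a 1, …, a (n-1)` (1-based indexing). -/
def jacobiMatrix (n : ℕ) (b a : ℕ → ℂ) : Matrix (Fin n) (Fin n) ℂ :=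
  Matrix.of fun i j =>
    if (i : ℕ) = (j : ℕ) then b ((i : ℕ) + 1)
    else if (i : ℕ) + 1 = (j : ℕ) then a ((i : ℕ) + 1)
    else if (j : ℕ) + 1 = (i : ℕ) then a ((j : ℕ) + 1)
    else 0

/-!
Existence: every finite multiset in the upper half-plane is the spectrum of a triangular matrix
with imaginary part `l lᴴ` (Livšic's model). Such an operator leaves no proper subspace containing
`l` invariant, since on the orthogonal complement it would be symmetric and so have a real
eigenvalue. Hence `l, T l, T² l, …` can be orthonormalized to a full basis, in which `T` is upper
Hessenberg with positive subdiagonal; since the imaginary part lives only on the first basis vector,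
the matrix is Jacobi and only its `(1, 1)` entry is not real.

Uniqueness: conjugating the coefficients of the characteristic polynomial `p` only conjugates `b₁`,
so `p̄ - p` is `b₁ - b̄₁` times the characteristic polynomial of the matrix without its first row
and column. These two polynomials determine all entries through the three-term recurrence.
-/

open Polynomial Submodule InnerProductSpace ComplexConjugate

section ThreeTermRecurrence

variable {R : Type*} [CommRing R]

theorem eq_and_eq_of_C_mul_eq_C_mul_of_monic [IsDomain R] {P P' : R[X]} {c c' : R}
    (hP : P.Monic) (hP' : P'.Monic) (hc : c ≠ 0) (h : C c * P = C c' * P') :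
    c = c' ∧ P = P' := by
  obtain rfl : c = c' := by
    simpa [leadingCoeff_mul, hP.leadingCoeff, hP'.leadingCoeff] using congrArg leadingCoeff h
  exact ⟨rfl, mul_left_cancel₀ (C_ne_zero.2 hc) h⟩

theorem eq_of_X_sub_C_mul_sub_eq_of_degree_lt {P P' Q : R[X]} {β β' : R} (hQ : Q.Monic)
    (hP : P.degree < Q.degree) (hP' : P'.degree < Q.degree)
    (h : (X - C β) * Q - P = (X - C β') * Q - P') : β = β' ∧ P = P' := by
  have hdiff : C (β' - β) * Q = P - P' := by
    rw [C_sub]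
    linear_combination h
  obtain rfl : β = β' := by
    have hcoeff := congrArg (coeff · Q.natDegree) hdiff
    have hPcoeff := coeff_eq_zero_of_degree_lt (hP.trans_le degree_le_natDegree)
    have hPcoeff' := coeff_eq_zero_of_degree_lt (hP'.trans_le degree_le_natDegree)
    simp only [coeff_C_mul, coeff_sub, hPcoeff, hPcoeff', hQ.coeff_natDegree] at hcoeff
    linear_combination -hcoeff
  refine ⟨rfl, ?_⟩
  linear_combination -h

end ThreeTermRecurrence

section Jacobi

theorem jacobiMatrix_congr {n : ℕ} {b b' a a' : ℕ → ℂ} (hb : ∀ k < n, b (k + 1) = b' (k + 1))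
    (ha : ∀ k, k + 1 < n → a (k + 1) = a' (k + 1)) :
    jacobiMatrix n b a = jacobiMatrix n b' a' := by
  ext i j
  simp only [jacobiMatrix, Matrix.of_apply]
  split_ifs
  · exact hb i i.2
  · exact ha i (by omega)
  · exact ha j (by omega)
  · rfl

theorem jacobiMatrix_map (n : ℕ) (b a : ℕ → ℂ) (f : ℂ →+* ℂ) :
    (jacobiMatrix n b a).map f = jacobiMatrix n (fun k => f (b k)) fun k => f (a k) := by
  ext i j
  simp only [jacobiMatrix, Matrix.map_apply, Matrix.of_apply, apply_ite f, map_zero]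

theorem jacobiMatrix_submatrix_succ (n : ℕ) (b a : ℕ → ℂ) :
    (jacobiMatrix (n + 1) b a).submatrix Fin.succ Fin.succ =
      jacobiMatrix n (fun k => b (k + 1)) fun k => a (k + 1) := by
  ext i j
  simp [jacobiMatrix]

theorem charmatrix_submatrix_succ {R : Type*} [CommRing R] {n : ℕ}
    (M : Matrix (Fin (n + 1)) (Fin (n + 1)) R) :
    M.charmatrix.submatrix Fin.succ Fin.succ = (M.submatrix Fin.succ Fin.succ).charmatrix := by
  ext1 i j
  simp [Matrix.charmatrix_apply, Matrix.diagonal_apply]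

theorem jacobiMatrix_charpoly_one (b a : ℕ → ℂ) :
    (jacobiMatrix 1 b a).charpoly = X - C (b 1) := by
  simp [Matrix.charpoly, jacobiMatrix]

theorem det_charmatrix_jacobiMatrix_submatrix_succ_succAbove_one (n : ℕ) (b a : ℕ → ℂ) :
    ((jacobiMatrix (n + 2) b a).charmatrix.submatrix Fin.succ (Fin.succAbove 1)).det =
      -C (a 1) * (jacobiMatrix n (fun k => b (k + 2)) fun k => a (k + 2)).charpoly := by
  have hminor : ((jacobiMatrix (n + 2) b a).charmatrix.submatrix Fin.succ
      (Fin.succAbove 1)).submatrix Fin.succ Fin.succ =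
        (jacobiMatrix n (fun k => b (k + 2)) fun k => a (k + 2)).charmatrix := by
    rw [← jacobiMatrix_submatrix_succ n (fun k => b (k + 1)) fun k => a (k + 1),
      ← jacobiMatrix_submatrix_succ (n + 1), ← charmatrix_submatrix_succ,
      ← charmatrix_submatrix_succ]
    ext1 i j
    simp [Matrix.submatrix_apply]
  rw [Matrix.det_succ_column_zero, Finset.sum_eq_single 0]
  · rw [Fin.succAbove_zero, hminor]
    simp [jacobiMatrix, Matrix.charpoly]
  · intro i _ hi
    have hi' : (i : ℕ) ≠ 0 := Fin.val_ne_zero_iff.2 hi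
    simp [jacobiMatrix, hi']
  · simp

theorem jacobiMatrix_charpoly_succ_succ (n : ℕ) (b a : ℕ → ℂ) :
    (jacobiMatrix (n + 2) b a).charpoly =
      (X - C (b 1)) * (jacobiMatrix (n + 1) (fun k => b (k + 1)) fun k => a (k + 1)).charpoly -
        C (a 1 ^ 2) * (jacobiMatrix n (fun k => b (k + 2)) fun k => a (k + 2)).charpoly := by
  rw [Matrix.charpoly, Matrix.det_succ_row_zero, Fin.sum_univ_succ, Fin.sum_univ_succ,
    Finset.sum_eq_zero]
  · rw [Fin.succ_zero_eq_one, det_charmatrix_jacobiMatrix_submatrix_succ_succAbove_one,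
      Fin.succAbove_zero, charmatrix_submatrix_succ, jacobiMatrix_submatrix_succ,
      ← Matrix.charpoly]
    simp only [Fin.val_zero, Fin.val_one, pow_zero, pow_one, one_mul, jacobiMatrix,
      Matrix.charmatrix_apply_eq, Matrix.of_apply, ↓reduceIte, zero_add, ne_eq, zero_ne_one,
      not_false_eq_true, Matrix.charmatrix_apply_ne, add_zero, map_pow]
    ring
  · intro i _
    simp [jacobiMatrix, Fin.ext_iff]

theorem jacobiMatrix_charpoly_sub_charpoly {n : ℕ} {b b' : ℕ → ℂ} (a : ℕ → ℂ)
    (h : ∀ k < n, b (k + 2) = b' (k + 2)) :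
    (jacobiMatrix (n + 1) b' a).charpoly - (jacobiMatrix (n + 1) b a).charpoly =
      C (b 1 - b' 1) * (jacobiMatrix n (fun k => b (k + 1)) fun k => a (k + 1)).charpoly := by
  cases n with
  | zero =>
    rw [jacobiMatrix_charpoly_one, jacobiMatrix_charpoly_one]
    simp [Matrix.charpoly]
  | succ n =>
    have htail : jacobiMatrix (n + 1) (fun k => b' (k + 1)) (fun k => a (k + 1)) =
        jacobiMatrix (n + 1) (fun k => b (k + 1)) fun k => a (k + 1) :=
      jacobiMatrix_congr (fun k hk => (h k hk).symm) fun _ _ => rfl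
    have htail' : jacobiMatrix n (fun k => b' (k + 2)) (fun k => a (k + 2)) =
        jacobiMatrix n (fun k => b (k + 2)) fun k => a (k + 2) :=
      jacobiMatrix_congr (fun k hk => (h (k + 1) (by omega)).symm) fun _ _ => rfl
    rw [jacobiMatrix_charpoly_succ_succ, jacobiMatrix_charpoly_succ_succ, htail, htail', C_sub]
    ring

theorem jacobiMatrix_entries_eq_of_charpoly_eq {n : ℕ} {b b' a a' : ℕ → ℂ}
    (ha : ∀ k < n, a (k + 1) ≠ 0)
    (h : (jacobiMatrix (n + 1) b a).charpoly = (jacobiMatrix (n + 1) b' a').charpoly)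
    (htail : (jacobiMatrix n (fun k => b (k + 1)) fun k => a (k + 1)).charpoly =
      (jacobiMatrix n (fun k => b' (k + 1)) fun k => a' (k + 1)).charpoly) :
    (∀ k < n + 1, b (k + 1) = b' (k + 1)) ∧ ∀ k < n, a (k + 1) ^ 2 = a' (k + 1) ^ 2 := by
  induction n generalizing b b' a a' with
  | zero =>
    rw [jacobiMatrix_charpoly_one, jacobiMatrix_charpoly_one, sub_right_inj, C_inj] at h
    simpa using h
  | succ n ih =>
    rw [jacobiMatrix_charpoly_succ_succ, jacobiMatrix_charpoly_succ_succ, ← htail] at h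
    have hdeg (c : ℂ) (b₁ a₁ b₂ a₂ : ℕ → ℂ) : (C c * (jacobiMatrix n b₁ a₁).charpoly).degree <
        (jacobiMatrix (n + 1) b₂ a₂).charpoly.degree := by
      rw [C_mul']
      refine (degree_smul_le _ _).trans_lt ?_
      simp only [Matrix.charpoly_degree_eq_dim, Fintype.card_fin]
      exact_mod_cast n.lt_succ_self
    obtain ⟨hb, hlast⟩ := eq_of_X_sub_C_mul_sub_eq_of_degree_lt (Matrix.charpoly_monic _)
      (hdeg ..) (hdeg ..) h
    rw [Nat.forall_lt_succ_left] at ha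
    obtain ⟨hsq, htail'⟩ := eq_and_eq_of_C_mul_eq_C_mul_of_monic (Matrix.charpoly_monic _)
      (Matrix.charpoly_monic _) (pow_ne_zero 2 ha.1) hlast
    obtain ⟨ihb, iha⟩ := ih ha.2 htail htail'
    exact ⟨Nat.forall_lt_succ_left.2 ⟨hb, ihb⟩, Nat.forall_lt_succ_left.2 ⟨hsq, iha⟩⟩

/-- Jacobi matrices with rank-one dissipative part: the first diagonal entry lies in the open upper
half-plane, the others are real, and the off-diagonal entries are positive. The sequences `b` and
`a` are indexed from `1`; only `b 1, …, b n` and `a 1, …, a (n - 1)` are entries of the matrix. -/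
def IsDissipativeJacobi {n : ℕ} (J : Matrix (Fin n) (Fin n) ℂ) : Prop :=
  ∃ (b : ℕ → ℂ) (a : ℕ → ℝ),
    J = jacobiMatrix n b (fun k => (a k : ℂ)) ∧
    0 < (b 1).im ∧
    (∀ k, 2 ≤ k → k ≤ n → (b k).im = 0) ∧
    (∀ k, 1 ≤ k → k ≤ n - 1 → 0 < a k)

theorem jacobiMatrix_charpoly_map_conj_sub_charpoly {n : ℕ} {b : ℕ → ℂ} (a : ℕ → ℝ)
    (hb : ∀ k < n, (b (k + 2)).im = 0) :
    (jacobiMatrix (n + 1) b fun k => (a k : ℂ)).charpoly.map (starRingEnd ℂ) -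
        (jacobiMatrix (n + 1) b fun k => (a k : ℂ)).charpoly =
      C (b 1 - conj (b 1)) *
        (jacobiMatrix n (fun k => b (k + 1)) fun k => (a (k + 1) : ℂ)).charpoly := by
  rw [← Matrix.charpoly_map, jacobiMatrix_map]
  simp only [Complex.conj_ofReal]
  exact jacobiMatrix_charpoly_sub_charpoly _
    fun k hk => (Complex.conj_eq_iff_im.2 (hb k hk)).symm

theorem IsDissipativeJacobi.eq_of_charpoly_eq {n : ℕ} {J J' : Matrix (Fin n) (Fin n) ℂ}
    (hJ : IsDissipativeJacobi J) (hJ' : IsDissipativeJacobi J') (h : J.charpoly = J'.charpoly) :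
    J = J' := by
  cases n with
  | zero => exact Subsingleton.elim _ _
  | succ n =>
    obtain ⟨b, a, rfl, him, hreal, hpos⟩ := hJ
    obtain ⟨b', a', rfl, -, hreal', hpos'⟩ := hJ'
    have hb : b 1 - conj (b 1) ≠ 0 := sub_ne_zero.2 fun hconj =>
      him.ne' (Complex.conj_eq_iff_im.1 hconj.symm)
    have hpos (k) (hk : k < n) : 0 < a (k + 1) := hpos _ (by omega) (by omega)
    have hpos' (k) (hk : k < n) : 0 < a' (k + 1) := hpos' _ (by omega) (by omega)
    have hconj := jacobiMatrix_charpoly_map_conj_sub_charpoly a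
      fun k (_ : k < n) => hreal (k + 2) (by omega) (by omega)
    rw [h, jacobiMatrix_charpoly_map_conj_sub_charpoly a'
      fun k (_ : k < n) => hreal' (k + 2) (by omega) (by omega)] at hconj
    have htail := (eq_and_eq_of_C_mul_eq_C_mul_of_monic (Matrix.charpoly_monic _)
      (Matrix.charpoly_monic _) hb hconj.symm).2
    obtain ⟨hbb, haa⟩ := jacobiMatrix_entries_eq_of_charpoly_eq
      (fun k hk => Complex.ofReal_ne_zero.2 (hpos k hk).ne') h htail
    refine jacobiMatrix_congr hbb fun k hk => ?_
    have hsq : a (k + 1) ^ 2 = a' (k + 1) ^ 2 := by exact_mod_cast haa k (by omega)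
    rw [(pow_left_inj₀ (hpos k (by omega)).le (hpos' k (by omega)).le two_ne_zero).1 hsq]

end Jacobi

section GramSchmidt

variable {𝕜 E ι : Type*} [RCLike 𝕜] [NormedAddCommGroup E] [InnerProductSpace 𝕜 E]
  [LinearOrder ι] [LocallyFiniteOrderBot ι] [WellFoundedLT ι]

local notation "⟪" x ", " y "⟫" => inner 𝕜 x y

theorem sub_gramSchmidt_mem_span (f : ι → E) (i : ι) :
    f i - gramSchmidt 𝕜 f i ∈ span 𝕜 (f '' Set.Iio i) := by
  rw [← span_gramSchmidt_Iio, sub_eq_iff_eq_add'.2 (gramSchmidt_def'' 𝕜 f i)]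
  exact sum_mem fun j hj =>
    smul_mem _ _ (subset_span (Set.mem_image_of_mem _ (Finset.mem_Iio.1 hj)))

theorem inner_gramSchmidt_eq_zero_of_mem_span (f : ι → E) {i : ι} {x : E}
    (hx : x ∈ span 𝕜 (f '' Set.Iio i)) : ⟪gramSchmidt 𝕜 f i, x⟫ = 0 := by
  rw [← mem_orthogonal_singleton_iff_inner_right]
  refine span_le.2 ?_ hx
  rintro _ ⟨j, hj, rfl⟩
  exact mem_orthogonal_singleton_iff_inner_right.2 (gramSchmidt_inv_triangular 𝕜 f hj)

theorem inner_gramSchmidt_self_apply (f : ι → E) (i : ι) :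
    ⟪gramSchmidt 𝕜 f i, f i⟫ = (‖gramSchmidt 𝕜 f i‖ : 𝕜) ^ 2 := by
  rw [← inner_self_eq_norm_sq_to_K, ← sub_eq_zero, ← inner_sub_right]
  exact inner_gramSchmidt_eq_zero_of_mem_span f (sub_gramSchmidt_mem_span f i)

end GramSchmidt

section Arnoldi

/-- The Krylov sequence `v, T v, T² v, …`. -/
def krylov {R M : Type*} [Semiring R] [AddCommMonoid M] [Module R M] (T : M →ₗ[R] M) (v : M)
    (k : ℕ) : M :=
  (T ^ k) v

/-- `v` is a cyclic vector of `T` if it lies in no proper `T`-invariant submodule. -/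
def IsCyclicVector {R M : Type*} [Semiring R] [AddCommMonoid M] [Module R M] (T : M →ₗ[R] M)
    (v : M) : Prop :=
  ∀ W : Submodule R M, v ∈ W → W ≤ W.comap T → W = ⊤

theorem map_mem_span_krylov {R M : Type*} [Semiring R] [AddCommMonoid M] [Module R M]
    (T : M →ₗ[R] M) (v : M) {x : M} {k : ℕ} (hx : x ∈ span R (krylov T v '' Set.Iio k)) :
    T x ∈ span R (krylov T v '' Set.Iio (k + 1)) := by
  suffices span R (krylov T v '' Set.Iio k) ≤
      (span R (krylov T v '' Set.Iio (k + 1))).comap T from this hx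
  rw [span_le]
  rintro _ ⟨j, hj, rfl⟩
  refine subset_span ⟨j + 1, Nat.succ_lt_succ hj, ?_⟩
  rw [krylov, krylov, pow_succ', Module.End.mul_apply]

variable {𝕜 E : Type*} [RCLike 𝕜] [NormedAddCommGroup E] [InnerProductSpace 𝕜 E]
  (T : E →ₗ[𝕜] E) (v : E)

local notation "⟪" x ", " y "⟫" => inner 𝕜 x y

/-- The Arnoldi vectors: the orthonormalization of the Krylov sequence. They vanish from the index
on at which the Krylov sequence becomes linearly dependent. -/
noncomputable def arnoldi (k : ℕ) : E :=
  gramSchmidtNormed 𝕜 (krylov T v) k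

/-- The diagonal entries of the matrix of `T` in the Arnoldi vectors, indexed from `1`. -/
noncomputable def arnoldiDiag (k : ℕ) : 𝕜 :=
  ⟪arnoldi T v (k - 1), T (arnoldi T v (k - 1))⟫

/-- The subdiagonal entries of the matrix of `T` in the Arnoldi vectors, indexed from `1`. -/
noncomputable def arnoldiSubdiag (k : ℕ) : ℝ :=
  ‖gramSchmidt 𝕜 (krylov T v) k‖ / ‖gramSchmidt 𝕜 (krylov T v) (k - 1)‖

theorem inner_arnoldi_eq_zero_of_mem_span {k : ℕ} {x : E}
    (hx : x ∈ span 𝕜 (krylov T v '' Set.Iio k)) : ⟪arnoldi T v k, x⟫ = 0 := by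
  rw [arnoldi, gramSchmidtNormed, inner_smul_left, inner_gramSchmidt_eq_zero_of_mem_span _ hx,
    mul_zero]

theorem gramSchmidt_krylov_mem_span (k : ℕ) :
    gramSchmidt 𝕜 (krylov T v) k ∈ span 𝕜 (krylov T v '' Set.Iio (k + 1)) := by
  rw [← span_gramSchmidt_Iio]
  exact subset_span ⟨k, k.lt_succ_self, rfl⟩

theorem inner_arnoldi_map_arnoldi_of_lt {i j : ℕ} (h : j + 1 < i) :
    ⟪arnoldi T v i, T (arnoldi T v j)⟫ = 0 := by
  refine inner_arnoldi_eq_zero_of_mem_span T v (span_mono (Set.image_mono ?_)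
    (map_mem_span_krylov T v (smul_mem _ _ (gramSchmidt_krylov_mem_span T v j))))
  exact Set.Iio_subset_Iio h

theorem inner_gramSchmidt_krylov_succ_map (k : ℕ) :
    ⟪gramSchmidt 𝕜 (krylov T v) (k + 1), T (gramSchmidt 𝕜 (krylov T v) k)⟫ =
      (‖gramSchmidt 𝕜 (krylov T v) (k + 1)‖ : 𝕜) ^ 2 := by
  have hmap : T (krylov T v k - gramSchmidt 𝕜 (krylov T v) k) =
      krylov T v (k + 1) - T (gramSchmidt 𝕜 (krylov T v) k) := by
    rw [map_sub, krylov, krylov, pow_succ', Module.End.mul_apply]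
  have horth := inner_gramSchmidt_eq_zero_of_mem_span _
    (map_mem_span_krylov T v (sub_gramSchmidt_mem_span (krylov T v) k))
  rw [hmap, inner_sub_right, inner_gramSchmidt_self_apply, sub_eq_zero] at horth
  exact horth.symm

theorem inner_arnoldi_succ_map_arnoldi (k : ℕ) :
    ⟪arnoldi T v (k + 1), T (arnoldi T v k)⟫ = (arnoldiSubdiag T v (k + 1) : 𝕜) := by
  simp only [arnoldi, arnoldiSubdiag, Nat.add_sub_cancel, gramSchmidtNormed, map_smul,
    inner_smul_left, inner_smul_right, inner_gramSchmidt_krylov_succ_map, map_inv₀,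
    RCLike.conj_ofReal]
  rcases eq_or_ne ‖gramSchmidt 𝕜 (krylov T v) (k + 1)‖ 0 with h | h
  · simp [h]
  · push_cast
    have h' : (‖gramSchmidt 𝕜 (krylov T v) (k + 1)‖ : 𝕜) ≠ 0 := RCLike.ofReal_ne_zero.2 h
    field_simp

theorem arnoldi_zero : arnoldi T v 0 = (‖v‖ : 𝕜)⁻¹ • v := by
  have h : gramSchmidt 𝕜 (krylov T v) 0 = v := gramSchmidt_bot (𝕜 := 𝕜) (krylov T v)
  rw [arnoldi, gramSchmidtNormed, h]

theorem inner_arnoldi_start_of_pos {k : ℕ} (hk : 0 < k) : ⟪arnoldi T v k, v⟫ = 0 :=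
  inner_arnoldi_eq_zero_of_mem_span T v (subset_span ⟨0, hk, rfl⟩)

variable {T v}

namespace IsCyclicVector

theorem gramSchmidt_krylov_ne_zero (hcyc : IsCyclicVector T v) {k : ℕ}
    (hk : k < Module.finrank 𝕜 E) : gramSchmidt 𝕜 (krylov T v) k ≠ 0 := by
  intro hzero
  have hdep : krylov T v k ∈ span 𝕜 (krylov T v '' Set.Iio k) := by
    simpa [hzero] using sub_gramSchmidt_mem_span (𝕜 := 𝕜) (krylov T v) k
  have hspan : span 𝕜 (krylov T v '' Set.Iio (k + 1)) = span 𝕜 (krylov T v '' Set.Iio k) := by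
    rw [← Order.succ_eq_add_one, Order.Iio_succ_eq_insert, Set.image_insert_eq,
      span_insert_eq_span hdep]
  have htop : span 𝕜 (krylov T v '' Set.Iio k) = ⊤ := by
    refine hcyc _ ?_ fun x hx => ?_
    · rw [← hspan]
      exact subset_span ⟨0, k.succ_pos, rfl⟩
    · exact hspan.le (map_mem_span_krylov T v hx)
  have hcard : Module.finrank 𝕜 (span 𝕜 (krylov T v '' Set.Iio k)) ≤ k := by
    rw [Set.image_eq_range]
    exact (finrank_range_le_card _).trans_eq (by simp)
  rw [htop, finrank_top] at hcard
  exact hk.not_ge hcard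

theorem arnoldiSubdiag_pos (hcyc : IsCyclicVector T v) {k : ℕ}
    (hk : k < Module.finrank 𝕜 E) : 0 < arnoldiSubdiag T v k :=
  div_pos (norm_pos_iff.2 (hcyc.gramSchmidt_krylov_ne_zero hk))
    (norm_pos_iff.2 (hcyc.gramSchmidt_krylov_ne_zero (by omega)))

theorem orthonormal_arnoldi (hcyc : IsCyclicVector T v) :
    Orthonormal 𝕜 fun i : Fin (Module.finrank 𝕜 E) => arnoldi T v i := by
  have hne (i : Fin (Module.finrank 𝕜 E)) : gramSchmidtNormed 𝕜 (krylov T v) i ≠ 0 := by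
    simpa [gramSchmidtNormed] using hcyc.gramSchmidt_krylov_ne_zero i.2
  exact (gramSchmidtNormed_orthonormal' (krylov T v)).comp
    (fun i : Fin (Module.finrank 𝕜 E) => ⟨i, hne i⟩)
    fun i j hij => Fin.ext (congrArg Subtype.val hij)

/-- The Arnoldi vectors of a cyclic vector, as an orthonormal basis. -/
noncomputable def arnoldiBasis (hcyc : IsCyclicVector T v) [FiniteDimensional 𝕜 E] :
    OrthonormalBasis (Fin (Module.finrank 𝕜 E)) 𝕜 E :=
  OrthonormalBasis.mk hcyc.orthonormal_arnoldi
    (hcyc.orthonormal_arnoldi.linearIndependent.span_eq_top_of_card_eq_finrank' (by simp)).ge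

theorem arnoldiBasis_apply (hcyc : IsCyclicVector T v) [FiniteDimensional 𝕜 E]
    (i : Fin (Module.finrank 𝕜 E)) : hcyc.arnoldiBasis i = arnoldi T v i := by
  rw [arnoldiBasis, OrthonormalBasis.coe_mk]

end IsCyclicVector

end Arnoldi

section RankOneImaginaryPart

variable {E : Type*} [NormedAddCommGroup E] [InnerProductSpace ℂ E] {T : E →ₗ[ℂ] E} {l : E}

/-- `T` has imaginary part `(T - T*) / 2i = l l*`, stated through inner products so that no
adjoint is needed. -/
def HasRankOneImaginaryPart (T : E →ₗ[ℂ] E) (l : E) : Prop :=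
  ∀ x y, ⟪x, T y⟫_ℂ - ⟪T x, y⟫_ℂ = 2 * Complex.I * (⟪x, l⟫_ℂ * ⟪l, y⟫_ℂ)

namespace HasRankOneImaginaryPart

theorem im_inner_map_self (hT : HasRankOneImaginaryPart T l) (x : E) :
    (⟪x, T x⟫_ℂ).im = ‖⟪l, x⟫_ℂ‖ ^ 2 := by
  have h := congrArg Complex.im (hT x x)
  rw [← inner_conj_symm (T x) x, ← inner_conj_symm x l, Complex.conj_mul', ← Complex.ofReal_pow,
    Complex.sub_im, Complex.conj_im, Complex.im_mul_ofReal] at h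
  simp only [Complex.mul_im, Complex.re_ofNat, Complex.im_ofNat, Complex.I_re, Complex.I_im] at h
  linarith

theorem inner_map_comm (hT : HasRankOneImaginaryPart T l) (x : E) {y : E} (hy : ⟪l, y⟫_ℂ = 0) :
    ⟪x, T y⟫_ℂ = ⟪T x, y⟫_ℂ := by
  rw [← sub_eq_zero, hT, hy, mul_zero, mul_zero]

theorem exists_hasEigenvalue_im_eq_zero [FiniteDimensional ℂ E]
    (hT : HasRankOneImaginaryPart T l) {W : Submodule ℂ E} (hl : l ∈ W) (hW : W ≤ W.comap T)
    (htop : W ≠ ⊤) : ∃ μ, Module.End.HasEigenvalue T μ ∧ μ.im = 0 := by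
  have horth (x : Wᗮ) : ⟪l, (x : E)⟫_ℂ = 0 := inner_right_of_mem_orthogonal hl x.2
  have hinv (x : E) (hx : x ∈ Wᗮ) : T x ∈ Wᗮ := (mem_orthogonal _ _).2 fun w hw => by
    rw [hT.inner_map_comm w (horth ⟨x, hx⟩)]
    exact inner_right_of_mem_orthogonal (K := W) (hW hw) hx
  have : Nontrivial Wᗮ := nontrivial_iff_ne_bot.2 (orthogonal_eq_bot_iff.not.2 htop)
  have hsymm : (T.restrict hinv).IsSymmetric := fun x y =>
    (hT.inner_map_comm (x : E) (horth y)).symm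
  obtain ⟨μ, hμ⟩ := Module.End.exists_eigenvalue (T.restrict hinv)
  refine ⟨μ, ?_, Complex.conj_eq_iff_im.1 (hsymm.conj_eigenvalue_eq_self hμ)⟩
  obtain ⟨x, hx⟩ := hμ.exists_hasEigenvector
  exact Module.End.hasEigenvalue_of_hasEigenvector (x := (x : E))
    ⟨Module.End.mem_eigenspace_iff.2 (congrArg Subtype.val hx.apply_eq_smul),
      fun h => hx.2 (Subtype.ext h)⟩

theorem isCyclicVector [FiniteDimensional ℂ E] (hT : HasRankOneImaginaryPart T l)
    (hμ : ∀ μ, Module.End.HasEigenvalue T μ → μ.im ≠ 0) : IsCyclicVector T l := by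
  intro W hl hW
  by_contra htop
  obtain ⟨μ, heig, him⟩ := hT.exists_hasEigenvalue_im_eq_zero hl hW htop
  exact hμ μ heig him

theorem inner_arnoldi_map_arnoldi_eq_conj (hT : HasRankOneImaginaryPart T l) (i : ℕ) {j : ℕ}
    (hj : 0 < j) :
    ⟪arnoldi T l i, T (arnoldi T l j)⟫_ℂ = conj ⟪arnoldi T l j, T (arnoldi T l i)⟫_ℂ := by
  rw [hT.inner_map_comm _ (inner_eq_zero_symm.1 (inner_arnoldi_start_of_pos T l hj)),
    inner_conj_symm]

theorem inner_arnoldi_map_arnoldi (hT : HasRankOneImaginaryPart T l) {n : ℕ} (i j : Fin n) :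
    ⟪arnoldi T l i, T (arnoldi T l j)⟫_ℂ =
      jacobiMatrix n (arnoldiDiag T l) (fun k => (arnoldiSubdiag T l k : ℂ)) i j := by
  simp only [jacobiMatrix, Matrix.of_apply]
  split_ifs with hdiag hsuper hsub
  · rw [hdiag, arnoldiDiag, Nat.add_sub_cancel]
  · rw [← hsuper, hT.inner_arnoldi_map_arnoldi_eq_conj _ (Nat.succ_pos _),
      inner_arnoldi_succ_map_arnoldi]
    exact Complex.conj_ofReal _
  · rw [← hsub]
    exact inner_arnoldi_succ_map_arnoldi T l j
  · rcases lt_or_gt_of_ne hdiag with h | h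
    · rw [hT.inner_arnoldi_map_arnoldi_eq_conj _ (by omega),
        inner_arnoldi_map_arnoldi_of_lt T l (by omega), map_zero]
    · exact inner_arnoldi_map_arnoldi_of_lt T l (by omega)

theorem im_arnoldiDiag_one (hT : HasRankOneImaginaryPart T l) :
    (arnoldiDiag T l 1).im = ‖l‖ ^ 2 := by
  have hnorm : ‖⟪l, arnoldi T l 0⟫_ℂ‖ = ‖l‖ := by
    rw [arnoldi_zero, inner_smul_right, inner_self_eq_norm_sq_to_K]
    rcases eq_or_ne ‖l‖ 0 with h | h
    · simp [h]
    · simp [pow_two, h]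
  rw [arnoldiDiag, hT.im_inner_map_self, Nat.sub_self, hnorm]

theorem im_arnoldiDiag_of_two_le (hT : HasRankOneImaginaryPart T l) {k : ℕ} (hk : 2 ≤ k) :
    (arnoldiDiag T l k).im = 0 := by
  rw [arnoldiDiag, hT.im_inner_map_self,
    inner_eq_zero_symm.1 (inner_arnoldi_start_of_pos T l (by omega)), norm_zero,
    zero_pow two_ne_zero]

theorem exists_isDissipativeJacobi_charpoly_eq [FiniteDimensional ℂ E] [Nontrivial E]
    (hT : HasRankOneImaginaryPart T l)
    (hμ : ∀ μ, Module.End.HasEigenvalue T μ → μ.im ≠ 0) :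
    ∃ J : Matrix (Fin (Module.finrank ℂ E)) (Fin (Module.finrank ℂ E)) ℂ,
      IsDissipativeJacobi J ∧ J.charpoly = T.charpoly := by
  have hcyc := hT.isCyclicVector hμ
  have hl : l ≠ 0 := by
    rintro rfl
    exact bot_ne_top (hcyc ⊥ (zero_mem _) bot_le)
  refine ⟨_, ⟨arnoldiDiag T l, arnoldiSubdiag T l, rfl, ?_,
    fun k hk _ => hT.im_arnoldiDiag_of_two_le hk,
    fun k hk hkn => hcyc.arnoldiSubdiag_pos (by omega)⟩, ?_⟩
  · rw [hT.im_arnoldiDiag_one]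
    exact pow_pos (norm_pos_iff.2 hl) 2
  · rw [← LinearMap.charpoly_toMatrix T hcyc.arnoldiBasis.toBasis]
    refine congrArg Matrix.charpoly (Matrix.ext fun i j => ?_)
    have hentry : LinearMap.toMatrix hcyc.arnoldiBasis.toBasis hcyc.arnoldiBasis.toBasis T i j =
        ⟪arnoldi T l i, T (arnoldi T l j)⟫_ℂ := by
      rw [LinearMap.toMatrix_apply, OrthonormalBasis.coe_toBasis_repr_apply,
        OrthonormalBasis.repr_apply_apply, OrthonormalBasis.coe_toBasis, hcyc.arnoldiBasis_apply,
        hcyc.arnoldiBasis_apply]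
    exact (hT.inner_arnoldi_map_arnoldi i j).symm.trans hentry.symm

end HasRankOneImaginaryPart

end RankOneImaginaryPart

section Livsic

theorem hasRankOneImaginaryPart_toEuclideanLin {ι : Type*} [Fintype ι] [DecidableEq ι]
    {M : Matrix ι ι ℂ} {l : ι → ℂ}
    (h : M - M.conjTranspose = (2 * Complex.I) • Matrix.vecMulVec l (star l)) :
    HasRankOneImaginaryPart M.toEuclideanLin (WithLp.toLp 2 l) := by
  intro x y
  have hadj : ⟪M.toEuclideanLin x, y⟫_ℂ = ⟪x, M.conjTranspose.toEuclideanLin y⟫_ℂ := by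
    rw [Matrix.toEuclideanLin_conjTranspose_eq_adjoint, LinearMap.adjoint_inner_right]
  have hrank : (Matrix.vecMulVec l (star l)).toEuclideanLin y =
      ⟪WithLp.toLp 2 l, y⟫_ℂ • WithLp.toLp 2 l := by
    ext i
    simp [Matrix.vecMulVec_mulVec, EuclideanSpace.inner_eq_star_dotProduct, dotProduct_comm,
      mul_comm]
  rw [hadj, ← inner_sub_right, ← LinearMap.sub_apply, ← map_sub, h, map_smul,
    LinearMap.smul_apply, hrank, inner_smul_right, inner_smul_right]
  ring

/-- Livšic's triangular model: an upper triangular matrix with prescribed diagonal `z` and imaginary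
part `l lᴴ`, where `l i = √(Im (z i))`. -/
noncomputable def livsicMatrix {n : ℕ} (z : Fin n → ℂ) : Matrix (Fin n) (Fin n) ℂ :=
  Matrix.of fun i j =>
    if i = j then z i
    else if i < j then 2 * Complex.I * (√(z i).im * √(z j).im : ℝ)
    else 0

theorem livsicMatrix_charpoly {n : ℕ} (z : Fin n → ℂ) :
    (livsicMatrix z).charpoly = ∏ k, (X - C (z k)) := by
  rw [Matrix.charpoly_of_isUpperTriangular]
  · simp [livsicMatrix]
  · intro i j (hji : j < i)
    simp [livsicMatrix, hji.ne', hji.not_gt]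

theorem livsicMatrix_sub_conjTranspose {n : ℕ} {z : Fin n → ℂ} (hz : ∀ k, 0 ≤ (z k).im) :
    livsicMatrix z - (livsicMatrix z).conjTranspose =
      (2 * Complex.I) • Matrix.vecMulVec (fun k => (√(z k).im : ℂ))
        (star fun k => (√(z k).im : ℂ)) := by
  ext i j
  simp only [livsicMatrix, Matrix.sub_apply, Matrix.conjTranspose_apply, Matrix.of_apply,
    Matrix.smul_apply, Matrix.vecMulVec_apply, Pi.star_apply]
  rcases lt_trichotomy i j with h | rfl | h
  · simp [h.ne, h.ne', h, h.not_gt]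
  · have hsq : (√(z i).im : ℂ) * √(z i).im = ((z i).im : ℂ) := by
      exact_mod_cast Real.mul_self_sqrt (hz i)
    simp only [↓reduceIte, RCLike.star_def, Complex.sub_conj, Complex.ofReal_mul,
      Complex.ofReal_ofNat, Complex.conj_ofReal, hsq, smul_eq_mul]
    ring
  · simp only [h.ne', ↓reduceIte, h.not_gt, h.ne, h, Complex.ofReal_mul, star_mul', star_ofNat,
      RCLike.star_def, Complex.conj_I, Complex.conj_ofReal, smul_eq_mul]
    ring

theorem exists_isDissipativeJacobi_charpoly_eq_prod {n : ℕ} (hn : 1 ≤ n) {z : Fin n → ℂ}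
    (hz : ∀ k, 0 < (z k).im) :
    ∃ J : Matrix (Fin n) (Fin n) ℂ, IsDissipativeJacobi J ∧ J.charpoly = ∏ k, (X - C (z k)) := by
  have hchar : (livsicMatrix z).toEuclideanLin.charpoly = ∏ k, (X - C (z k)) := by
    rw [← livsicMatrix_charpoly]
    exact (livsicMatrix z).charpoly_toLin (PiLp.basisFun 2 ℂ (Fin n))
  have hμ (μ : ℂ) (h : Module.End.HasEigenvalue (livsicMatrix z).toEuclideanLin μ) :
      μ.im ≠ 0 := by
    rw [Module.End.hasEigenvalue_iff_isRoot_charpoly, hchar, isRoot_prod] at h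
    obtain ⟨k, -, hk⟩ := h
    rw [← root_X_sub_C.1 hk]
    exact (hz k).ne'
  have : NeZero n := ⟨by omega⟩
  have hrank := hasRankOneImaginaryPart_toEuclideanLin
    (livsicMatrix_sub_conjTranspose fun k => (hz k).le)
  have hdim : Module.finrank ℂ (EuclideanSpace ℂ (Fin n)) = n := finrank_euclideanSpace_fin
  have h := hrank.exists_isDissipativeJacobi_charpoly_eq hμ
  rwa [hdim, hchar] at h

end Livsic

/-- **Inverse spectral theorem for finite dissipative Jacobi matrices with rank-one
imaginary part.**  Given `z₁, …, zₙ` in the open upper half-plane (not necessarily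
distinct), there exists a unique `n × n` Jacobi matrix with `Im b₁ > 0`, `bₖ` real for
`k ≥ 2` and `aₖ > 0`, whose eigenvalues counted with algebraic multiplicity are exactly
`z₁, …, zₙ`. -/
theorem dissipative_jacobi_inverse_spectral_problem
    (n : ℕ) (hn : 1 ≤ n) (z : Fin n → ℂ) (hz : ∀ k, 0 < (z k).im) :
    ∃! J : Matrix (Fin n) (Fin n) ℂ,
      (∃ (b : ℕ → ℂ) (a : ℕ → ℝ),
          J = jacobiMatrix n b (fun k => (a k : ℂ)) ∧
          0 < (b 1).im ∧
          (∀ k, 2 ≤ k → k ≤ n → (b k).im = 0) ∧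
          (∀ k, 1 ≤ k → k ≤ n - 1 → 0 < a k)) ∧
      J.charpoly = ∏ k : Fin n, (Polynomial.X - Polynomial.C (z k)) := by
  obtain ⟨J, hJ, hchar⟩ := exists_isDissipativeJacobi_charpoly_eq_prod hn hz
  exact ⟨J, ⟨hJ, hchar⟩, fun J' ⟨hJ', hchar'⟩ =>
    IsDissipativeJacobi.eq_of_charpoly_eq hJ' hJ (hchar'.trans hchar.symm)⟩
end

section
/- For real x ≠ 0 and real y, the identity Σ_{k=-∞}^{∞} 2x/(x² + (y + 2πk)²) = -sinh(x)/(cos(y) - cosh(x)) holds. -/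
/-!
The summand is `i / (u + i x) - i / (u - i x)` with `u = y + 2πk`. Summing symmetrically, the
partial fraction expansion `∑ 1 / (z + 2πk) = cot (z / 2) / 2` gives the value
`i (cot ((y + i x) / 2) - cot ((y - i x) / 2)) / 2`. The difference of cotangents has numerator
`sin (-i x)`, and its denominator is a product of two sines that linearizes to
`(cosh x - cos y) / 2`.
-/

open Complex SummationFilter

theorem sum_Icc_neg_natCast_eq_add_sum_range {M : Type*} [AddCommGroup M] (f : ℤ → M) (N : ℕ) :
    ∑ k ∈ Finset.Icc (-N : ℤ) N, f k
      = f 0 + ∑ n ∈ Finset.range N, (f (-(n + 1)) + f (n + 1)) := by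
  induction N with
  | zero => simp
  | succ N ih =>
    push_cast
    rw [Finset.sum_Icc_succ_eq_add_endpoints, ih, Finset.sum_range_succ]
    abel

theorem hasSum_symmetricIcc_inv_add_intCast {z : ℂ} (hz : z ∈ integerComplement) :
    HasSum (fun k : ℤ ↦ (z + k)⁻¹) (Real.pi * cot (Real.pi * z)) (symmetricIcc ℤ) := by
  rw [hasSum_symmetricIcc_iff]
  have h := (tendsto_logDeriv_euler_cot_sub hz).const_add z⁻¹
  rw [one_div, add_sub_cancel] at h
  refine h.congr fun N ↦ ?_
  simp [sum_Icc_neg_natCast_eq_add_sum_range, cotTerm, sub_eq_add_neg]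

theorem summable_inv_add_intCast_mul_add_intCast (z w : ℂ) :
    Summable fun k : ℤ ↦ ((z + k) * (w + k))⁻¹ := by
  apply EisensteinSeries.summable_inv_of_isBigO_rpow_inv one_lt_two
  simpa [pow_two] using (EisensteinSeries.linear_inv_isBigO_right 1 w).mul
    (EisensteinSeries.linear_inv_isBigO_right 1 z)

theorem hasSum_inv_add_intCast_sub_inv_add_intCast {z w : ℂ}
    (hz : z ∈ integerComplement) (hw : w ∈ integerComplement) :
    HasSum (fun k : ℤ ↦ (z + k)⁻¹ - (w + k)⁻¹)
      (Real.pi * cot (Real.pi * z) - Real.pi * cot (Real.pi * w)) := by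
  have hsummable : Summable fun k : ℤ ↦ (z + k)⁻¹ - (w + k)⁻¹ := by
    refine ((summable_inv_add_intCast_mul_add_intCast z w).mul_left (w - z)).congr fun k ↦ ?_
    rw [inv_sub_inv (integerComplement_add_ne_zero hz k) (integerComplement_add_ne_zero hw k),
      add_sub_add_right_eq_sub, div_eq_mul_inv]
  have hsymm := (hasSum_symmetricIcc_inv_add_intCast hz).sub
    (hasSum_symmetricIcc_inv_add_intCast hw)
  rw [← hsymm.tsum_eq, tsum_eq_of_summable_unconditional hsummable]
  exact hsummable.hasSum

theorem mem_integerComplement_of_sin_pi_mul_ne_zero {z : ℂ} (hz : sin (Real.pi * z) ≠ 0) :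
    z ∈ integerComplement := by
  rintro ⟨n, rfl⟩
  exact hz (by rw [mul_comm, sin_int_mul_pi])

theorem hasSum_inv_add_two_pi_mul_intCast_sub {z w : ℂ}
    (hz : sin (z / 2) ≠ 0) (hw : sin (w / 2) ≠ 0) :
    HasSum (fun k : ℤ ↦ (z + 2 * Real.pi * k)⁻¹ - (w + 2 * Real.pi * k)⁻¹)
      ((cot (z / 2) - cot (w / 2)) / 2) := by
  have hπ : (Real.pi : ℂ) ≠ 0 := ofReal_ne_zero.mpr Real.pi_ne_zero
  have hhalf (u : ℂ) : Real.pi * (u / (2 * Real.pi)) = u / 2 := by field_simp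
  have hinv (u : ℂ) (k : ℤ) :
      (u + 2 * Real.pi * k)⁻¹ = (2 * Real.pi : ℂ)⁻¹ * (u / (2 * Real.pi) + k)⁻¹ := by
    rw [← mul_inv]
    field_simp
  have h := hasSum_inv_add_intCast_sub_inv_add_intCast
    (mem_integerComplement_of_sin_pi_mul_ne_zero (by rwa [hhalf z]))
    (mem_integerComplement_of_sin_pi_mul_ne_zero (by rwa [hhalf w]))
  simp only [hinv, ← mul_sub]
  convert! h.mul_left (2 * Real.pi : ℂ)⁻¹ using 1
  rw [hhalf, hhalf]
  field_simp

theorem cot_sub_cot {a b : ℂ} (ha : sin a ≠ 0) (hb : sin b ≠ 0) :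
    cot a - cot b = sin (b - a) / (sin a * sin b) := by
  rw [cot, cot, div_sub_div _ _ ha hb, sin_sub]
  ring

theorem sin_mul_sin_half_add_sub_mul_I (x y : ℂ) :
    sin ((y + x * I) / 2) * sin ((y - x * I) / 2) = (cosh x - cos y) / 2 := by
  have hsum : (x * I + y) / 2 = (y + x * I) / 2 := by ring
  have hdiff : (x * I - y) / 2 = -((y - x * I) / 2) := by ring
  rw [← cos_mul_I, cos_sub_cos, hsum, hdiff, sin_neg]
  ring

theorem sin_mul_sin_half_add_sub_mul_I_ne_zero {x y : ℂ} (h : cos y ≠ cosh x) :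
    sin ((y + x * I) / 2) * sin ((y - x * I) / 2) ≠ 0 := by
  rw [sin_mul_sin_half_add_sub_mul_I]
  exact div_ne_zero (sub_ne_zero.mpr h.symm) two_ne_zero

theorem cot_half_add_mul_I_sub_cot_half_sub_mul_I {x y : ℂ} (h : cos y ≠ cosh x) :
    cot ((y + x * I) / 2) - cot ((y - x * I) / 2) = 2 * I * sinh x / (cos y - cosh x) := by
  have hsin := sin_mul_sin_half_add_sub_mul_I_ne_zero h
  have hdiff : (y - x * I) / 2 - (y + x * I) / 2 = -(x * I) := by ring
  rw [cot_sub_cot (left_ne_zero_of_mul hsin) (right_ne_zero_of_mul hsin),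
    sin_mul_sin_half_add_sub_mul_I, hdiff, sin_neg, sin_mul_I, ← neg_sub (cosh x), div_neg,
    ← neg_div, div_div_eq_mul_div]
  ring

theorem sq_add_sq_eq_add_mul_I_mul_sub_mul_I (x u : ℂ) :
    x ^ 2 + u ^ 2 = (u + x * I) * (u - x * I) := by
  linear_combination (x ^ 2) * I_sq

theorem sq_add_sq_ne_zero_of_cos_ne_cosh {x u : ℂ} (h : cos u ≠ cosh x) : x ^ 2 + u ^ 2 ≠ 0 := by
  rw [sq_add_sq_eq_add_mul_I_mul_sub_mul_I]
  refine mul_ne_zero (fun hadd ↦ h ?_) (fun hsub ↦ h ?_)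
  · rw [eq_neg_of_add_eq_zero_left hadd, cos_neg, cos_mul_I]
  · rw [sub_eq_zero.mp hsub, cos_mul_I]

theorem two_mul_div_sq_add_sq {x u : ℂ} (h : x ^ 2 + u ^ 2 ≠ 0) :
    2 * x / (x ^ 2 + u ^ 2) = I * ((u + x * I)⁻¹ - (u - x * I)⁻¹) := by
  rw [sq_add_sq_eq_add_mul_I_mul_sub_mul_I] at h ⊢
  rw [inv_sub_inv (left_ne_zero_of_mul h) (right_ne_zero_of_mul h), ← mul_div_assoc]
  congr 1
  linear_combination (2 * x) * I_sq

theorem sum_over_int_eq_neg_sinh_div_general {x y : ℂ} (h : cos y ≠ cosh x) :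
    HasSum (fun k : ℤ ↦ 2 * x / (x ^ 2 + (y + 2 * Real.pi * k) ^ 2))
      (-sinh x / (cos y - cosh x)) := by
  have hsin := sin_mul_sin_half_add_sub_mul_I_ne_zero h
  have hterm (k : ℤ) : 2 * x / (x ^ 2 + (y + 2 * Real.pi * k) ^ 2)
      = I * ((y + x * I + 2 * Real.pi * k)⁻¹ - (y - x * I + 2 * Real.pi * k)⁻¹) := by
    have hk : cos (y + 2 * Real.pi * k) ≠ cosh x := by
      rwa [mul_comm _ (k : ℂ), cos_add_int_mul_two_pi]
    rw [two_mul_div_sq_add_sq (sq_add_sq_ne_zero_of_cos_ne_cosh hk), add_right_comm,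
      add_sub_right_comm]
  have hvalue : -sinh x / (cos y - cosh x)
      = I * ((cot ((y + x * I) / 2) - cot ((y - x * I) / 2)) / 2) := by
    rw [cot_half_add_mul_I_sub_cot_half_sub_mul_I h]
    linear_combination (-sinh x / (cos y - cosh x)) * I_sq
  simpa only [hterm, hvalue] using (hasSum_inv_add_two_pi_mul_intCast_sub
    (left_ne_zero_of_mul hsin) (right_ne_zero_of_mul hsin)).mul_left I

/-- **Summation identity:**
`Σ_{k ∈ ℤ} 2x/(x² + (y + 2πk)²) = -sinh x / (cos y - cosh x)` for real `x ≠ 0`, `y`. -/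
theorem sum_over_int_eq_neg_sinh_div (x y : ℝ) (hx : x ≠ 0) :
    ∑' k : ℤ, 2 * x / (x ^ 2 + (y + 2 * Real.pi * (k : ℝ)) ^ 2)
      = -Real.sinh x / (Real.cos y - Real.cosh x) := by
  have h : Real.cos y ≠ Real.cosh x := ((Real.cos_le_one y).trans_lt (Real.one_lt_cosh.mpr hx)).ne
  have hsum := sum_over_int_eq_neg_sinh_div_general (x := x) (y := y) (mod_cast h)
  exact HasSum.tsum_eq (mod_cast hsum)
end
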